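/- Let n ≥ 0, s ≥ 0 and ψ ∈ [0,π] with (s,ψ) ≠ (2,0). Let z, v ∈ ℂ^{n+1} satisfy |z| = 1, |v| = 1, Re⟨z,v⟩ = 0 and Re⟨i·z, v⟩ = cos ψ, and define w₀ := (1/(2i|C_s(ψ)|))·(i(|C_s(ψ)| + s/2)·z − v) and w₁ := (1/(2i|C_s(ψ)|))·(i(|C_s(ψ)| − s/2)·z + v). Then: (i) ⟨w₀,w₁⟩ = 0 and |w₀|² + |w₁|² = 1, so (w₀,w₁) is admissible; (ii) |w₁|² − |w₀|² = cos(Arg(C_s(ψ))); (iii) w₀ + w₁ = z; and (iv) the curve γ(t) := e^{i s t/2}·(e^{−i|C_s(ψ)|t}·w₀ + e^{i|C_s(ψ)|t}·w₁) satisfies γ(0) = z, γ'(0) = v and γ''(t) − i·s·γ'(t) + (1 − s·cos ψ)·γ(t) = 0 for all t. In particular, the unit-speed magnetic geodesic of strength s with initial condition (z,v) is contained in the Clifford torus 𝕋²_{w₀,w₁}, whose width is Arg(C_s(ψ)) up to the identification τ ∼ π − τ. -/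

import Mathlib

noncomputable section

open scoped Real

/-- Hermitian product on `ℂ^{n+1}`, ℂ-linear in the first argument and
conjugate-linear in the second (paper convention). -/
def herm {n : ℕ} (x y : EuclideanSpace ℂ (Fin (n + 1))) : ℂ := inner ℂ y x

/-- Norm of the point `C_s(ψ) = (−s/2 + cos ψ, sin ψ) ∈ ℝ²`, i.e.
`|C_s(ψ)| = sqrt(s²/4 + 1 − s cos ψ)`. -/
def normC (s ψ : ℝ) : ℝ := Real.sqrt (s ^ 2 / 4 + 1 - s * Real.cos ψ)

/-- Angle of `C_s(ψ)` with the positive x-axis: the unique `τ ∈ [0,π]` with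
`cos τ = (−s/2 + cos ψ)/|C_s(ψ)|`. -/
def argC (s ψ : ℝ) : ℝ := Real.arccos ((-s / 2 + Real.cos ψ) / normC s ψ)

/-- `γ` is a unit-speed magnetic geodesic of strength `s` with contact angle `ψ`,
in the paper's ambient-space formulation: `γ'' − i·s·γ' + (1 − s·cos ψ)·γ = 0`,
`|γ(0)| = 1`, `|γ'(0)| = 1`, `Re⟨γ(0),γ'(0)⟩ = 0`, `Re⟨i·γ(0),γ'(0)⟩ = cos ψ`. -/
def IsMagGeo {n : ℕ} (s ψ : ℝ) (γ : ℝ → EuclideanSpace ℂ (Fin (n + 1))) : Prop :=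
  ContDiff ℝ (⊤ : ℕ∞) γ ∧
  (∀ t : ℝ, deriv (deriv γ) t - ((s : ℂ) * Complex.I) • deriv γ t
      + ((1 : ℂ) - (s : ℂ) * (Real.cos ψ : ℂ)) • γ t = 0) ∧
  ‖γ 0‖ = 1 ∧ ‖deriv γ 0‖ = 1 ∧ (herm (γ 0) (deriv γ 0)).re = 0 ∧
  (herm (Complex.I • γ 0) (deriv γ 0)).re = Real.cos ψ

/-- The curve `γ(t) = e^{i s t/2}(e^{−i|C_s(ψ)|t} w₀ + e^{i|C_s(ψ)|t} w₁)`. -/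
def magCurve {n : ℕ} (s ψ : ℝ) (w₀ w₁ : EuclideanSpace ℂ (Fin (n + 1))) (t : ℝ) :
    EuclideanSpace ℂ (Fin (n + 1)) :=
  Complex.exp (Complex.I * s * t / 2) •
    (Complex.exp (-(Complex.I * normC s ψ * t)) • w₀ +
     Complex.exp (Complex.I * normC s ψ * t) • w₁)

/-- The Clifford torus `𝕋²_{w₀,w₁} = {λ₀ w₀ + λ₁ w₁ : |λ₀| = |λ₁| = 1}`. -/
def cliffordTorus {n : ℕ} (w₀ w₁ : EuclideanSpace ℂ (Fin (n + 1))) :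
    Set (EuclideanSpace ℂ (Fin (n + 1))) :=
  {x | ∃ l₀ l₁ : ℂ, ‖l₀‖ = 1 ∧ ‖l₁‖ = 1 ∧ x = l₀ • w₀ + l₁ • w₁}

theorem aux_deriv {n : ℕ} (a b : ℂ) (x y : EuclideanSpace ℂ (Fin (n + 1))) :
    deriv (fun t : ℝ => Complex.exp (a * t) • x + Complex.exp (b * t) • y) =
      fun t : ℝ => Complex.exp (a * t) • (a • x) + Complex.exp (b * t) • (b • y) := by
  have key : ∀ (c : ℂ) (t : ℝ),
      HasDerivAt (fun t : ℝ => Complex.exp (c * t)) (Complex.exp (c * t) * c) t := by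
    intro c t
    have h1 : HasDerivAt (fun t : ℝ => c * (t : ℂ)) (c * 1) t :=
      (Complex.ofRealCLM.hasDerivAt (x := t)).const_mul c
    simpa using h1.cexp
  funext t
  have := ((key a t).smul_const x).add ((key b t).smul_const y)
  have h2 := this.deriv
  simp only [mul_smul] at h2
  exact h2

theorem aux_curve {n : ℕ} (s ψ : ℝ) (x y : EuclideanSpace ℂ (Fin (n + 1))) :
    magCurve s ψ x y = fun t : ℝ =>
      Complex.exp ((Complex.I * (s / 2 - normC s ψ)) * t) • x +
      Complex.exp ((Complex.I * (s / 2 + normC s ψ)) * t) • y := by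
  funext t
  simp only [magCurve, smul_add, smul_smul, ← Complex.exp_add]
  congr 3 <;> ring_nf

theorem aux_pos (s ψ : ℝ) (hs : 0 ≤ s) (hψ : ψ ∈ Set.Icc 0 π) (hne : (s, ψ) ≠ (2, 0)) :
    0 < s ^ 2 / 4 + 1 - s * Real.cos ψ := by
  have h := Real.sin_sq_add_cos_sq ψ
  have e : s ^ 2 / 4 + 1 - s * Real.cos ψ = (s / 2 - Real.cos ψ) ^ 2 + Real.sin ψ ^ 2 := by
    linear_combination -h
  rw [e]
  rcases eq_or_lt_of_le hψ.1 with h0 | h0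
  · subst h0
    have h2 : s ≠ 2 := fun h => hne (by rw [h])
    have h3 : s / 2 - 1 ≠ 0 := fun h => h2 (by linarith)
    rw [Real.cos_zero]
    positivity
  rcases eq_or_lt_of_le hψ.2 with h1 | h1
  · rw [h1, Real.cos_pi]
    have : 0 < s / 2 - -1 := by linarith
    positivity
  · have := Real.sin_pos_of_pos_of_lt_pi h0 h1
    positivity

/-- from initial data `(z,v)` on the unit sphere bundle the explicit
pair `(w₀,w₁)` is admissible, has width `Arg(C_s(ψ))`, sums to `z`, and the
associated curve solves the magnetic geodesic ODE with initial condition `(z,v)`;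
in particular the geodesic lies in the Clifford torus `𝕋²_{w₀,w₁}`. -/
theorem stmt_2 {n : ℕ} (s ψ : ℝ) (hs : 0 ≤ s) (hψ : ψ ∈ Set.Icc 0 π)
    (hne : (s, ψ) ≠ (2, 0))
    (z v : EuclideanSpace ℂ (Fin (n + 1)))
    (hz : ‖z‖ = 1) (hv : ‖v‖ = 1)
    (hzv : (herm z v).re = 0)
    (hangle : (herm (Complex.I • z) v).re = Real.cos ψ)
    (w₀ w₁ : EuclideanSpace ℂ (Fin (n + 1)))
    (hw₀ : w₀ = (2 * Complex.I * (normC s ψ : ℂ))⁻¹ •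
        ((Complex.I * ((normC s ψ : ℂ) + (s : ℂ) / 2)) • z - v))
    (hw₁ : w₁ = (2 * Complex.I * (normC s ψ : ℂ))⁻¹ •
        ((Complex.I * ((normC s ψ : ℂ) - (s : ℂ) / 2)) • z + v)) :
    (herm w₀ w₁ = 0 ∧ ‖w₀‖ ^ 2 + ‖w₁‖ ^ 2 = 1) ∧
    ‖w₁‖ ^ 2 - ‖w₀‖ ^ 2 = Real.cos (argC s ψ) ∧
    w₀ + w₁ = z ∧
    (magCurve s ψ w₀ w₁ 0 = z ∧ deriv (magCurve s ψ w₀ w₁) 0 = v ∧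
      ∀ t : ℝ, deriv (deriv (magCurve s ψ w₀ w₁)) t
        - ((s : ℂ) * Complex.I) • deriv (magCurve s ψ w₀ w₁) t
        + ((1 : ℂ) - (s : ℂ) * (Real.cos ψ : ℂ)) • magCurve s ψ w₀ w₁ t = 0) ∧
    (∀ t : ℝ, magCurve s ψ w₀ w₁ t ∈ cliffordTorus w₀ w₁) := by
  have hpos := aux_pos s ψ hs hψ hne
  have hCpos : 0 < normC s ψ := Real.sqrt_pos.2 hpos
  have hC2 : normC s ψ ^ 2 = s ^ 2 / 4 + 1 - s * Real.cos ψ := Real.sq_sqrt hpos.le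
  have hA : argC s ψ = Real.arccos ((-s / 2 + Real.cos ψ) / normC s ψ) := rfl
  rw [aux_curve]
  generalize normC s ψ = C at *
  have hsc : Real.cos ψ ^ 2 ≤ 1 := Real.cos_sq_le_one ψ
  clear hψ hne
  generalize Real.cos ψ = k at *
  have hC0 : (C : ℂ) ≠ 0 := by exact_mod_cast hCpos.ne'
  have hC2' : (C : ℂ) ^ 2 = (s : ℂ) ^ 2 / 4 + 1 - s * (k : ℂ) := by exact_mod_cast hC2
  have hvz : inner ℂ v z = -(Complex.I * (k : ℂ)) := by
    simp only [herm, inner_smul_right] at hzv hangle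
    apply Complex.ext
    · simpa using hzv
    · simp at hangle ⊢
      linarith
  have hzv' : inner ℂ z v = Complex.I * (k : ℂ) := by
    rw [← inner_conj_symm, hvz]; simp
  have hzz : inner ℂ z z = (1 : ℂ) := by simp [inner_self_eq_norm_sq_to_K, hz]
  have hvv : inner ℂ v v = (1 : ℂ) := by simp [inner_self_eq_norm_sq_to_K, hv]
  have hsum : w₀ + w₁ = z := by
    rw [hw₀, hw₁, ← smul_add]
    have : (Complex.I * ((C : ℂ) + (s : ℂ) / 2)) • z - v +
        ((Complex.I * ((C : ℂ) - (s : ℂ) / 2)) • z + v) = (2 * Complex.I * (C : ℂ)) • z := by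
      module
    rw [this, smul_smul, inv_mul_cancel₀ (by simp [hC0]), one_smul]
  have hI := Complex.I_sq
  have n0 : ‖w₀‖ ^ 2 = ((C + s / 2) ^ 2 - 2 * (C + s / 2) * k + 1) / (4 * C ^ 2) := by
    have : ((‖w₀‖ ^ 2 : ℝ) : ℂ) = ((((C + s / 2) ^ 2 - 2 * (C + s / 2) * k + 1) / (4 * C ^ 2) : ℝ) : ℂ) := by
      have := inner_self_eq_norm_sq_to_K (𝕜 := ℂ) w₀
      push_cast
      refine Eq.trans this.symm ?_
      rw [hw₀]
      simp only [inner_smul_left, inner_smul_right, inner_sub_left, inner_sub_right, hzz, hvv, hvz, hzv', map_inv₀, map_mul, map_add, map_div₀, Complex.conj_I, Complex.conj_ofReal, map_ofNat, ← Complex.ofReal_cos]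
      field_simp
      ring_nf
      simp only [Complex.I_sq]
      ring
    exact_mod_cast this
  have n1 : ‖w₁‖ ^ 2 = ((C - s / 2) ^ 2 + 2 * (C - s / 2) * k + 1) / (4 * C ^ 2) := by
    have : ((‖w₁‖ ^ 2 : ℝ) : ℂ) = ((((C - s / 2) ^ 2 + 2 * (C - s / 2) * k + 1) / (4 * C ^ 2) : ℝ) : ℂ) := by
      have := inner_self_eq_norm_sq_to_K (𝕜 := ℂ) w₁
      push_cast
      refine Eq.trans this.symm ?_
      rw [hw₁]
      simp only [inner_smul_left, inner_smul_right, inner_add_left, inner_add_right, hzz, hvv, hvz, hzv', map_inv₀, map_mul, map_sub, map_div₀, Complex.conj_I, Complex.conj_ofReal, map_ofNat, ← Complex.ofReal_cos]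
      field_simp
      ring_nf
      simp only [Complex.I_sq]
      ring
    exact_mod_cast this
  refine ⟨⟨?_, ?_⟩, ?_, hsum, ⟨?_, ?_, ?_⟩, ?_⟩
  · rw [herm, hw₀, hw₁]
    simp only [inner_smul_left, inner_smul_right]
    rw [mul_eq_zero]; right
    rw [mul_eq_zero]; right
    simp only [inner_smul_left, inner_smul_right, inner_add_left, inner_sub_right, hzz, hvv, hvz, hzv', map_mul, map_sub, map_div₀, Complex.conj_I, Complex.conj_ofReal, map_ofNat]
    linear_combination hC2' - (C ^ 2 - s ^ 2 / 4 + s * (k : ℂ)) * hI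
  · rw [n0, n1]
    field_simp
    linear_combination (-8) * hC2
  · rw [n0, n1, hA]
    have hab : |(-s / 2 + k) / C| ≤ 1 := by
      rw [abs_div, abs_of_pos hCpos, div_le_one hCpos]
      apply abs_le_of_sq_le_sq _ hCpos.le
      nlinarith
    rw [Real.cos_arccos (abs_le.1 hab).1 (abs_le.1 hab).2]
    field_simp
    ring
  · simp [hsum]
  · rw [aux_deriv]
    simp only [Complex.ofReal_zero, mul_zero, Complex.exp_zero, one_smul]
    rw [hw₀, hw₁]
    match_scalars
    all_goals field_simp
    all_goals ring_nf
  · intro t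
    rw [aux_deriv, aux_deriv]
    simp only
    match_scalars
    · linear_combination (Complex.exp (Complex.I * (s / 2 - C) * t)) * (-hC2' + (C ^ 2 - s ^ 2 / 4) * hI)
    · linear_combination (Complex.exp (Complex.I * (s / 2 + C) * t)) * (-hC2' + (C ^ 2 - s ^ 2 / 4) * hI)
  · intro t
    refine ⟨_, _, ?_, ?_, rfl⟩
    · rw [Complex.norm_exp]; simp
    · rw [Complex.norm_exp]; simp
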